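/- For all integers k ≥ 1, n ≥ 1 and all sets A, B of 2-element subsets of {1,…,n}, the graph G_{k,n}(A,B) contains an induced subgraph isomorphic to the path P_{4k+3} on 4k+3 vertices if and only if A ∩ B ≠ ∅; equivalently, G_{k,n}(A,B) is P_{4k+3}-induced-subgraph-free if and only if A and B are disjoint. -/

import Mathlib

/-!
The graph `G_{k,n}(A,B)` from the paper "Local certification of forbidden subgraphs".

Vertices: clique vertices `(b, ℓ, i)` where `b : Bool` is the side (false = superscript 0,
true = superscript 1), `ℓ : Fin (2*k)` is the (0-based) level, so `K^b_{ℓ+1}` in the paper's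
1-based notation, and `i : Fin n` is the label inside the clique; plus three special vertices
`Sum.inr 0 = v₀`, `Sum.inr 1 = v₁`, `Sum.inr 2 = w`.

A set `A` of 2-element subsets of `{1,…,n}` is encoded as `A : Set (Sym2 (Fin n))` all of whose
members are non-diagonal.
-/

/-- Vertex type of `G_{k,n}(A,B)`. -/
abbrev GknVert (k n : ℕ) := (Bool × Fin (2 * k) × Fin n) ⊕ Fin 3

/-- The edges of `G_{k,n}(A,B)`, given in one direction; the graph is obtained by
symmetrizing with `SimpleGraph.fromRel`. -/
def gknRel (k n : ℕ) (A B : Set (Sym2 (Fin n))) :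
    GknVert k n → GknVert k n → Prop
  | Sum.inl (b, l, i), Sum.inl (b', l', j) =>
      -- edges inside one clique
      (b = b' ∧ l = l' ∧ i ≠ j) ∨
      -- the bipartite graph `G_A` between `K^0_1` and `K^1_1`
      (b = false ∧ b' = true ∧ (l : ℕ) = 0 ∧ (l' : ℕ) = 0 ∧ (i = j ∨ s(i, j) ∉ A)) ∨
      -- the bipartite graph `G_B` between `K^0_{2k}` and `K^1_{2k}`
      (b = false ∧ b' = true ∧ (l : ℕ) = 2 * k - 1 ∧ (l' : ℕ) = 2 * k - 1 ∧
        (i = j ∨ s(i, j) ∉ B)) ∨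
      -- the perfect matchings between `K^0_ℓ` and `K^1_ℓ` for `2 ≤ ℓ ≤ 2k-1` (1-based)
      (b ≠ b' ∧ l = l' ∧ 1 ≤ (l : ℕ) ∧ (l : ℕ) ≤ 2 * k - 2 ∧ i = j) ∨
      -- the antimatchings between consecutive levels (all four pairs of cliques)
      ((l' : ℕ) = (l : ℕ) + 1 ∧ i ≠ j)
  | Sum.inl (b, l, _), Sum.inr s =>
      -- `v₀` is complete to `K^0_1`, `v₁` is complete to `K^1_1`,
      -- `w` is complete to `K^0_{2k} ∪ K^1_{2k}`
      (s = 0 ∧ b = false ∧ (l : ℕ) = 0) ∨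
      (s = 1 ∧ b = true ∧ (l : ℕ) = 0) ∨
      (s = 2 ∧ (l : ℕ) = 2 * k - 1)
  | Sum.inr _, Sum.inl _ => False
  | Sum.inr _, Sum.inr _ => False

/-- The graph `G_{k,n}(A,B)`. -/
def Gkn (k n : ℕ) (A B : Set (Sym2 (Fin n))) : SimpleGraph (GknVert k n) :=
  SimpleGraph.fromRel (gknRel k n A B)

/-- Level of a vertex (special vertices get the dummy level `2k`). -/
def gknLev (k n : ℕ) : GknVert k n → ℕ
  | Sum.inl (_, l, _) => l
  | Sum.inr _ => 2 * k

/-- Side of a vertex. -/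
def gknSide (k n : ℕ) : GknVert k n → Bool
  | Sum.inl (b, _, _) => b
  | Sum.inr _ => false

/-- Label of a vertex inside its clique. -/
def gknLab (k n : ℕ) : GknVert k n → ℕ
  | Sum.inl (_, _, i) => i
  | Sum.inr _ => 0

lemma gkn_bool : ∀ p q r : Bool, p ≠ r → q ≠ r → p = q := by decide

lemma gkn_caseA (x y z z' e lx ly le : ℕ) (h1 : x + 1 = y ∨ y + 1 = x)
    (h2 : z + 1 = y ∨ y + 1 = z) (h3 : z' + 1 = x ∨ x + 1 = z')
    (h4 : le ≠ lx → (z + 1 = e ∨ e + 1 = z)) (h5 : le ≠ ly → (z' + 1 = e ∨ e + 1 = z'))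
    (h6 : le = lx → (e + 1 = x ∨ x + 1 = e)) (h7 : le = ly → (e + 1 = y ∨ y + 1 = e))
    (h8 : lx ≠ ly) : False := by
  by_cases a : le = lx
  · have := h6 a
    have := h5 (by omega)
    omega
  · have := h4 a
    by_cases b : le = ly
    · have := h7 b
      omega
    · have := h5 b
      omega

lemma gkn_caseB (x y z e e' lx le le' : ℕ) (h1 : x + 1 = y ∨ y + 1 = x)
    (h2 : z + 1 = y ∨ y + 1 = z) (h3 : e + 1 = e' ∨ e' + 1 = e) (h0 : le ≠ le')
    (h4 : le ≠ lx → (z + 1 = e ∨ e + 1 = z)) (h5 : le' ≠ lx → (z + 1 = e' ∨ e' + 1 = z))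
    (h6 : le = lx → (e + 1 = x ∨ x + 1 = e)) (h7 : le' = lx → (e' + 1 = x ∨ x + 1 = e')) :
    False := by
  by_cases a : le = lx
  · have := h6 a
    have := h5 (by omega)
    omega
  · have := h4 a
    by_cases b : le' = lx
    · have := h7 b
      omega
    · have := h5 b
      omega

/-- Two consecutive levels contain at most four vertices of an induced path (abstract form). -/
lemma gkn_local_bound {N : ℕ} (S : Finset (Fin N)) (lam sig : Fin N → Bool) (lab : Fin N → ℕ)
    (h1 : ∀ a ∈ S, ∀ b ∈ S, a ≠ b → lam a = lam b → sig a = sig b →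
      ((a : ℕ) + 1 = b ∨ (b : ℕ) + 1 = a) ∧ lab a ≠ lab b)
    (h2 : ∀ a ∈ S, ∀ b ∈ S, lam a ≠ lam b →
      (((a : ℕ) + 1 = b ∨ (b : ℕ) + 1 = a) ↔ lab a ≠ lab b))
    (h3 : ∀ a ∈ S, ∀ b ∈ S, lam a = lam b → sig a ≠ sig b → lab a = lab b →
      ((a : ℕ) + 1 = b ∨ (b : ℕ) + 1 = a)) :
    S.card ≤ 4 := by
  have h2' : ∀ a ∈ S, ∀ b ∈ S, lam a ≠ lam b →
      (((a : ℕ) + 1 = b ∨ (b : ℕ) + 1 = a) ∧ lab a ≠ lab b) ∨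
      (((a : ℕ) + 1 ≠ b ∧ (b : ℕ) + 1 ≠ a) ∧ lab a = lab b) := by
    intro a ha b hb hab
    have := h2 a ha b hb hab
    by_cases hl : lab a = lab b
    · right
      refine ⟨?_, hl⟩
      have := mt this.1 (not_not.2 hl)
      omega
    · exact Or.inl ⟨this.2 hl, hl⟩
  by_contra hS
  push Not at hS
  obtain ⟨x, hx, y, hy, hxy, hc⟩ := Finset.exists_ne_map_eq_of_card_lt_of_maps_to
    (s := S) (t := (Finset.univ : Finset (Bool × Bool))) (f := fun a => (lam a, sig a))
    (by simpa using hS) (by simp)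
  simp only [Prod.mk.injEq] at hc
  obtain ⟨hl, hs⟩ := hc
  have hxyN : (x : ℕ) ≠ y := fun h => hxy (Fin.ext h)
  obtain ⟨hxya, hxyl⟩ := h1 x hx y hy hxy hl hs
  set D := S.filter (fun a => lam a ≠ lam x) with hD
  set E := S.filter (fun a => lam a = lam x ∧ sig a ≠ sig x) with hE
  have hcov : S ⊆ ({x, y} ∪ D) ∪ E := by
    intro z hz
    by_contra hn
    simp only [hD, hE, Finset.mem_union, Finset.mem_insert, Finset.mem_singleton,
      Finset.mem_filter, not_or, not_and, not_not] at hn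
    obtain ⟨⟨⟨n1, n2⟩, n3⟩, n4⟩ := hn
    have l1 := n3 hz
    have s1 := n4 hz l1
    have q1 := (h1 z hz x hx n1 l1 s1).1
    have q2 := (h1 z hz y hy n2 (l1.trans hl) (s1.trans hs)).1
    omega
  have hDlab : ∀ z ∈ D, lab z = lab x ∨ lab z = lab y := by
    intro z hz
    simp only [hD, Finset.mem_filter] at hz
    by_contra hn
    push Not at hn
    have q1 := (h2 z hz.1 x hx hz.2).2 hn.1
    have q2 := (h2 z hz.1 y hy (hl ▸ hz.2)).2 hn.2
    omega
  have hDinj : ∀ z ∈ D, ∀ z' ∈ D, lab z = lab z' → z = z' := by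
    intro z hz z' hz' he
    have a1 := hDlab z hz
    simp only [hD, Finset.mem_filter] at hz hz'
    by_contra hne
    have hneN : (z : ℕ) ≠ z' := fun h => hne (Fin.ext h)
    have hzx : (z : ℕ) ≠ x := fun h => hz.2 (by rw [Fin.ext h])
    have hzy : (z : ℕ) ≠ y := fun h => hz.2 (by rw [Fin.ext h, hl])
    have hzx' : (z' : ℕ) ≠ x := fun h => hz'.2 (by rw [Fin.ext h])
    have hzy' : (z' : ℕ) ≠ y := fun h => hz'.2 (by rw [Fin.ext h, hl])
    have q1 := (h2' z hz.1 x hx hz.2)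
    have q2 := (h2' z hz.1 y hy (hl ▸ hz.2))
    have q3 := (h2' z' hz'.1 x hx hz'.2)
    have q4 := (h2' z' hz'.1 y hy (hl ▸ hz'.2))
    omega
  have hDc : D.card ≤ 2 := by
    by_contra hn
    push Not at hn
    obtain ⟨a, b, c, ha, hb, hc, hab, hac, hbc⟩ := Finset.two_lt_card_iff.1 hn
    have a1 := hDlab a ha
    have b1 := hDlab b hb
    have c1 := hDlab c hc
    have := mt (hDinj a ha b hb) hab
    have := mt (hDinj a ha c hc) hac
    have := mt (hDinj b hb c hc) hbc
    omega
  have hside : ∀ a ∈ E, ∀ b ∈ E, lam a = lam b ∧ sig a = sig b := by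
    intro a ha b hb
    simp only [hE, Finset.mem_filter] at ha hb
    refine ⟨ha.2.1.trans hb.2.1.symm, ?_⟩
    exact gkn_bool _ _ _ ha.2.2 hb.2.2
  have hEc : E.card ≤ 2 := by
    by_contra hn
    push Not at hn
    obtain ⟨a, b, c, ha, hb, hc, hab, hac, hbc⟩ := Finset.two_lt_card_iff.1 hn
    have q1 := (h1 a (Finset.mem_filter.1 ha).1 b (Finset.mem_filter.1 hb).1 hab
      (hside a ha b hb).1 (hside a ha b hb).2).1
    have q2 := (h1 a (Finset.mem_filter.1 ha).1 c (Finset.mem_filter.1 hc).1 hac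
      (hside a ha c hc).1 (hside a ha c hc).2).1
    have q3 := (h1 b (Finset.mem_filter.1 hb).1 c (Finset.mem_filter.1 hc).1 hbc
      (hside b hb c hc).1 (hside b hb c hc).2).1
    omega
  have htot : 5 ≤ 2 + D.card + E.card := by
    have t1 := Finset.card_le_card hcov
    have t2 := Finset.card_union_le ({x, y} ∪ D) E
    have t3 := Finset.card_union_le {x, y} D
    have t4 : ({x, y} : Finset (Fin N)).card ≤ 2 := Finset.card_le_two
    omega
  have hDE : ∀ z ∈ D, ∀ e ∈ E, (((z : ℕ) + 1 = e ∨ (e : ℕ) + 1 = z) ∧ lab z ≠ lab e) ∨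
      (((z : ℕ) + 1 ≠ e ∧ (e : ℕ) + 1 ≠ z) ∧ lab z = lab e) := by
    intro z hz e he
    simp only [hD, hE, Finset.mem_filter] at hz he
    exact h2' z hz.1 e he.1 (by rw [he.2.1]; exact hz.2)
  have hDx : ∀ z ∈ D, (((z : ℕ) + 1 = x ∨ (x : ℕ) + 1 = z) ∧ lab z ≠ lab x) ∨
      (((z : ℕ) + 1 ≠ x ∧ (x : ℕ) + 1 ≠ z) ∧ lab z = lab x) := by
    intro z hz
    simp only [hD, Finset.mem_filter] at hz
    exact h2' z hz.1 x hx hz.2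
  have hDy : ∀ z ∈ D, (((z : ℕ) + 1 = y ∨ (y : ℕ) + 1 = z) ∧ lab z ≠ lab y) ∨
      (((z : ℕ) + 1 ≠ y ∧ (y : ℕ) + 1 ≠ z) ∧ lab z = lab y) := by
    intro z hz
    simp only [hD, Finset.mem_filter] at hz
    exact h2' z hz.1 y hy (hl ▸ hz.2)
  have hEx : ∀ e ∈ E, (e : ℕ) ≠ x ∧ (lab e = lab x → ((e : ℕ) + 1 = x ∨ (x : ℕ) + 1 = e)) := by
    intro e he
    simp only [hE, Finset.mem_filter] at he
    exact ⟨fun h => he.2.2 (by rw [Fin.ext h]), h3 e he.1 x hx he.2.1 he.2.2⟩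
  have hEy : ∀ e ∈ E, (e : ℕ) ≠ y ∧ (lab e = lab y → ((e : ℕ) + 1 = y ∨ (y : ℕ) + 1 = e)) := by
    intro e he
    simp only [hE, Finset.mem_filter] at he
    exact ⟨fun h => he.2.2 (by rw [Fin.ext h, hs]),
      h3 e he.1 y hy (he.2.1.trans hl) (hs ▸ he.2.2)⟩
  rcases (by omega : (2 ≤ D.card ∧ 1 ≤ E.card) ∨ (1 ≤ D.card ∧ 2 ≤ E.card)) with ⟨hd, he⟩ | ⟨hd, he⟩
  · obtain ⟨z, hz, z', hz', hne⟩ := Finset.one_lt_card.1 hd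
    obtain ⟨e, he⟩ := Finset.card_pos.1 he
    have hll := mt (hDinj z hz z' hz') hne
    have p1 := hDlab z hz
    have p2 := hDlab z' hz'
    rcases (by omega : (lab z = lab x ∧ lab z' = lab y) ∨ (lab z = lab y ∧ lab z' = lab x))
      with ⟨u, u'⟩ | ⟨u, u'⟩
    · exact gkn_caseA x y z z' e (lab x) (lab y) (lab e) hxya
        (by have := hDy z hz; omega) (by have := hDx z' hz'; omega)
        (by have := hDE z hz e he; omega) (by have := hDE z' hz' e he; omega)
        (hEx e he).2 (hEy e he).2 hxyl
    · exact gkn_caseA x y z' z e (lab x) (lab y) (lab e) hxya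
        (by have := hDy z' hz'; omega) (by have := hDx z hz; omega)
        (by have := hDE z' hz' e he; omega) (by have := hDE z hz e he; omega)
        (hEx e he).2 (hEy e he).2 hxyl
  · obtain ⟨e, he, e', he', hne⟩ := Finset.one_lt_card.1 he
    obtain ⟨z, hz⟩ := Finset.card_pos.1 hd
    have q := h1 e (Finset.mem_filter.1 he).1 e' (Finset.mem_filter.1 he').1 hne
      (hside e he e' he').1 (hside e he e' he').2
    rcases hDlab z hz with u | u
    · exact gkn_caseB x y z e e' (lab x) (lab e) (lab e') hxya
        (by have := hDy z hz; omega) q.1 q.2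
        (by have := hDE z hz e he; omega) (by have := hDE z hz e' he'; omega)
        (hEx e he).2 (hEx e' he').2
    · exact gkn_caseB y x z e e' (lab y) (lab e) (lab e') hxya.symm
        (by have := hDx z hz; omega) q.1 q.2
        (by have := hDE z hz e he; omega) (by have := hDE z hz e' he'; omega)
        (hEy e he).2 (hEy e' he').2

/-- Arithmetic of the level counts. -/
lemma gkn_counts (k : ℕ) (c : ℕ → ℕ)
    (hpair : ∀ l, l + 1 < 2 * k → c l + c (l + 1) ≤ 4)
    (h0 : c 0 ≤ 2) (hlast : c (2 * k - 1) ≤ 2)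
    (hsum : 4 * k ≤ ∑ l ∈ Finset.range (2 * k), c l) :
    ∀ l, l < 2 * k → c l ≤ 2 := by
  have hs : ∀ m, ∑ l ∈ Finset.range (2 * m), c l
      = ∑ t ∈ Finset.range m, (c (2 * t) + c (2 * t + 1)) := by
    intro m
    induction m with
    | zero => simp
    | succ m ih =>
      rw [Finset.sum_range_succ, ← ih, show 2 * (m + 1) = 2 * m + 1 + 1 by ring,
        Finset.sum_range_succ, Finset.sum_range_succ]
      ring
  have heq : ∀ t, t < k → c (2 * t) + c (2 * t + 1) = 4 := by
    intro t ht
    by_contra hne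
    have hlt : ∑ t ∈ Finset.range k, (c (2 * t) + c (2 * t + 1)) < ∑ t ∈ Finset.range k, 4 := by
      apply Finset.sum_lt_sum
      · intro i hi
        rw [Finset.mem_range] at hi
        exact hpair (2 * i) (by omega)
      · refine ⟨t, Finset.mem_range.2 ht, ?_⟩
        have := hpair (2 * t) (by omega)
        omega
    rw [← hs] at hlt
    simp at hlt
    omega
  have hev : ∀ t, t < k → c (2 * t) ≤ 2 := by
    intro t
    induction t with
    | zero => intro _; exact h0
    | succ t ih =>
      intro ht
      have a := ih (by omega)
      have b := heq t (by omega)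
      have d := hpair (2 * t + 1) (by omega)
      rw [show 2 * (t + 1) = 2 * t + 1 + 1 by ring]
      omega
  have hod : ∀ t, t < k → c (2 * (k - 1 - t) + 1) ≤ 2 := by
    intro t
    induction t with
    | zero =>
      intro h
      rw [show 2 * (k - 1 - 0) + 1 = 2 * k - 1 by omega]
      exact hlast
    | succ t ih =>
      intro ht
      have a := ih (by omega)
      have b := heq (k - 1 - t) (by omega)
      have d := hpair (2 * (k - 1 - (t + 1)) + 1) (by omega)
      rw [show 2 * (k - 1 - (t + 1)) + 1 + 1 = 2 * (k - 1 - t) by omega] at d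
      omega
  intro l hl
  rcases Nat.even_or_odd' l with ⟨t, rfl | rfl⟩
  · exact hev t (by omega)
  · have := hod (k - 1 - t) (by omega)
    rwa [show k - 1 - (k - 1 - t) = t by omega] at this

section adj

variable {k n : ℕ} {A B : Set (Sym2 (Fin n))}

lemma gkn_adj_same {b : Bool} {l : Fin (2 * k)} {i j : Fin n} (h : i ≠ j) :
    (Gkn k n A B).Adj (Sum.inl (b, l, i)) (Sum.inl (b, l, j)) := by
  rw [Gkn, SimpleGraph.fromRel_adj]
  refine ⟨by simpa using h, Or.inl (Or.inl ⟨rfl, rfl, h⟩)⟩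

lemma gkn_adj_next {b b' : Bool} {l l' : Fin (2 * k)} {i j : Fin n} (h : (l' : ℕ) = l + 1) :
    (Gkn k n A B).Adj (Sum.inl (b, l, i)) (Sum.inl (b', l', j)) ↔ i ≠ j := by
  rw [Gkn, SimpleGraph.fromRel_adj]
  have hll : l ≠ l' := fun e => by rw [e] at h; omega
  constructor
  · rintro ⟨_, h' | h'⟩
    · simp only [gknRel] at h'
      rcases h' with h' | h' | h' | h' | h'
      · exact h'.2.2
      · omega
      · omega
      · exact absurd h'.2.1 hll
      · exact h'.2
    · simp only [gknRel] at h'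
      rcases h' with h' | h' | h' | h' | h'
      · exact h'.2.2.symm
      · omega
      · omega
      · exact absurd h'.2.1.symm hll
      · exact h'.2.symm
  · intro hij
    exact ⟨by simp [hij], Or.inl (Or.inr (Or.inr (Or.inr (Or.inr ⟨h, hij⟩))))⟩

lemma gkn_adj_opp {b b' : Bool} {l : Fin (2 * k)} {i : Fin n} (h : b ≠ b') :
    (Gkn k n A B).Adj (Sum.inl (b, l, i)) (Sum.inl (b', l, i)) := by
  rw [Gkn, SimpleGraph.fromRel_adj]
  refine ⟨by simp [h], ?_⟩
  have hl := l.2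
  by_cases h0 : (l : ℕ) = 0
  · cases b <;> cases b' <;> simp_all [gknRel]
  · by_cases h1 : (l : ℕ) = 2 * k - 1
    · cases b <;> cases b' <;> simp_all [gknRel]
    · left
      refine Or.inr (Or.inr (Or.inr (Or.inl ⟨h, rfl, by omega, by omega, rfl⟩)))

/-- Adjacent clique vertices lie on the same or on consecutive levels. -/
lemma gkn_adj_lev {b b' : Bool} {l l' : Fin (2 * k)} {i j : Fin n}
    (h : (Gkn k n A B).Adj (Sum.inl (b, l, i)) (Sum.inl (b', l', j))) :
    (l : ℕ) = l' ∨ (l : ℕ) = l' + 1 ∨ (l' : ℕ) = l + 1 := by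
  rw [Gkn, SimpleGraph.fromRel_adj] at h
  simp only [gknRel, Fin.ext_iff] at h
  omega

lemma gkn_adj_special {b : Bool} {l : Fin (2 * k)} {i : Fin n} {s : Fin 3} :
    (Gkn k n A B).Adj (Sum.inr s) (Sum.inl (b, l, i)) ↔
      (s = 0 ∧ b = false ∧ (l : ℕ) = 0) ∨ (s = 1 ∧ b = true ∧ (l : ℕ) = 0) ∨
      (s = 2 ∧ (l : ℕ) = 2 * k - 1) := by
  rw [Gkn, SimpleGraph.fromRel_adj]
  simp [gknRel]

lemma gkn_adj_special_special {s s' : Fin 3} :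
    ¬ (Gkn k n A B).Adj (Sum.inr s) (Sum.inr s') := by
  rw [Gkn, SimpleGraph.fromRel_adj]
  simp [gknRel]

lemma gkn_adj_A {l : Fin (2 * k)} {b b' : Bool} {i j : Fin n} (hl : (l : ℕ) = 0) (hb : b ≠ b')
    (h : ¬ (Gkn k n A B).Adj (Sum.inl (b, l, i)) (Sum.inl (b', l, j))) : s(i, j) ∈ A := by
  by_contra hn
  apply h
  rw [Gkn, SimpleGraph.fromRel_adj]
  refine ⟨by simp [hb], ?_⟩
  cases b <;> cases b' <;> simp_all [gknRel, Sym2.eq_swap]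

lemma gkn_adj_B {l : Fin (2 * k)} {b b' : Bool} {i j : Fin n} (hl : (l : ℕ) = 2 * k - 1)
    (hb : b ≠ b')
    (h : ¬ (Gkn k n A B).Adj (Sum.inl (b, l, i)) (Sum.inl (b', l, j))) : s(i, j) ∈ B := by
  by_contra hn
  apply h
  rw [Gkn, SimpleGraph.fromRel_adj]
  refine ⟨by simp [hb], ?_⟩
  cases b <;> cases b' <;> simp_all [gknRel, Sym2.eq_swap]

lemma gkn_not_adj_opp {l : Fin (2 * k)} {b b' : Bool} {i j : Fin n} (hb : b ≠ b') (hij : i ≠ j)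
    (h0 : s(i, j) ∈ A) (h1 : s(i, j) ∈ B) :
    ¬ (Gkn k n A B).Adj (Sum.inl (b, l, i)) (Sum.inl (b', l, j)) := by
  rw [Gkn, SimpleGraph.fromRel_adj]
  have h0' : s(j, i) ∈ A := by rwa [Sym2.eq_swap]
  have h1' : s(j, i) ∈ B := by rwa [Sym2.eq_swap]
  simp [gknRel, hb, hb.symm, hij, hij.symm, h0, h1, h0', h1']

lemma gkn_cases {n k : ℕ} (v : GknVert k n) :
    (∃ b l i, v = Sum.inl (b, l, i)) ∨ ∃ s, v = Sum.inr s := by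
  rcases v with ⟨b, l, i⟩ | s
  · exact Or.inl ⟨b, l, i, rfl⟩
  · exact Or.inr ⟨s, rfl⟩

end adj

lemma gkn_sum_le (k : ℕ) (c : ℕ → ℕ)
    (hpair : ∀ l, l + 1 < 2 * k → c l + c (l + 1) ≤ 4) :
    ∑ l ∈ Finset.range (2 * k), c l ≤ 4 * k := by
  induction k with
  | zero => simp
  | succ m ih =>
    rw [show 2 * (m + 1) = 2 * m + 1 + 1 by ring, Finset.sum_range_succ, Finset.sum_range_succ]
    have := ih (fun l hl => hpair l (by omega))
    have := hpair (2 * m) (by omega)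
    omega

lemma gkn_lev_form {k n : ℕ} {v : GknVert k n} {l : ℕ} (h : gknLev k n v = l) (hl : l < 2 * k) :
    ∃ b L i, v = Sum.inl (b, L, i) ∧ (L : ℕ) = l := by
  rcases v with ⟨b, L, i⟩ | s
  · exact ⟨b, L, i, rfl, h⟩
  · simp only [gknLev] at h
    omega

/-- An induced path on `4k+3` vertices yields a common element of `A` and `B`. -/
lemma gkn_inter_of_path (k n : ℕ) (hk : 1 ≤ k) (A B : Set (Sym2 (Fin n)))
    (f : SimpleGraph.pathGraph (4 * k + 3) ↪g Gkn k n A B) : (A ∩ B).Nonempty := by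
  have hadj : ∀ a b : Fin (4 * k + 3), (Gkn k n A B).Adj (f a) (f b) ↔
      ((a : ℕ) + 1 = b ∨ (b : ℕ) + 1 = a) := by
    intro a b
    rw [f.map_adj_iff, SimpleGraph.pathGraph_adj]
  have hinj : ∀ a b, f a = f b → a = b := fun a b h => f.injective h
  obtain ⟨T, hT⟩ : ∃ T : ℕ → Finset (Fin (4 * k + 3)), ∀ l a, a ∈ T l ↔ gknLev k n (f a) = l :=
    ⟨fun l => Finset.univ.filter (fun a => gknLev k n (f a) = l), by simp⟩
  -- consecutive levels
  have hpair : ∀ l, l + 1 < 2 * k → (T l).card + (T (l + 1)).card ≤ 4 := by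
    intro l hl
    have hdis : Disjoint (T l) (T (l + 1)) := by
      rw [Finset.disjoint_left]
      intro a ha hb
      rw [hT] at ha hb
      omega
    rw [← Finset.card_union_of_disjoint hdis]
    have hform : ∀ a ∈ T l ∪ T (l + 1), ∃ b L i, f a = Sum.inl (b, L, i) ∧
        ((L : ℕ) = l ∨ (L : ℕ) = l + 1) := by
      intro a ha
      rw [Finset.mem_union, hT, hT] at ha
      rcases ha with ha | ha
      · obtain ⟨b, L, i, h, h'⟩ := gkn_lev_form ha (by omega)
        exact ⟨b, L, i, h, Or.inl h'⟩
      · obtain ⟨b, L, i, h, h'⟩ := gkn_lev_form ha (by omega)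
        exact ⟨b, L, i, h, Or.inr h'⟩
    apply gkn_local_bound _ (fun a => decide (gknLev k n (f a) = l))
      (fun a => gknSide k n (f a)) (fun a => gknLab k n (f a))
    · intro a ha a' ha' hne hlam hsig
      obtain ⟨b, L, i, h, h'⟩ := hform a ha
      obtain ⟨c, L', j, g, g'⟩ := hform a' ha'
      simp only [h, g, gknLev, gknSide, gknLab, decide_eq_decide] at hlam hsig ⊢
      have hL : L = L' := Fin.ext (by omega)
      subst hL hsig
      have hij : i ≠ j := fun e => hne (hinj _ _ (by rw [h, g, e]))
      refine ⟨?_, fun e => hij (Fin.ext e)⟩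
      rw [← hadj, h, g]
      exact gkn_adj_same hij
    · intro a ha a' ha' hlam
      obtain ⟨b, L, i, h, h'⟩ := hform a ha
      obtain ⟨c, L', j, g, g'⟩ := hform a' ha'
      simp only [h, g, gknLev, gknLab, ne_eq, decide_eq_decide] at hlam ⊢
      rw [← hadj, h, g, ← Fin.ext_iff]
      rcases (by omega : (L' : ℕ) = L + 1 ∨ (L : ℕ) = L' + 1) with e | e
      · exact gkn_adj_next e
      · rw [SimpleGraph.adj_comm, gkn_adj_next e, ne_comm]
    · intro a ha a' ha' hlam hsig hlab
      obtain ⟨b, L, i, h, h'⟩ := hform a ha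
      obtain ⟨c, L', j, g, g'⟩ := hform a' ha'
      simp only [h, g, gknLev, gknSide, gknLab, decide_eq_decide] at hlam hsig hlab
      have hL : L = L' := Fin.ext (by omega)
      have hij : i = j := Fin.ext hlab
      subst hL hij
      rw [← hadj, h, g]
      exact gkn_adj_opp hsig
  -- special vertices
  have hsp : (T (2 * k)).map f.toEmbedding ⊆ (Finset.univ : Finset (Fin 3)).map
      ⟨Sum.inr, Sum.inr_injective⟩ := by
    intro v hv
    rw [Finset.mem_map] at hv
    obtain ⟨a, ha, rfl⟩ := hv
    rw [hT] at ha
    rcases gkn_cases (f a) with ⟨b, l, i, h⟩ | ⟨s, h⟩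
    · rw [h] at ha
      simp only [gknLev] at ha
      have := l.2
      omega
    · rw [Finset.mem_map]
      exact ⟨s, Finset.mem_univ _, h.symm⟩
  have hsum : ∑ l ∈ Finset.range (2 * k), (T l).card + (T (2 * k)).card = 4 * k + 3 := by
    rw [← Finset.sum_range_succ (fun l => (T l).card)]
    have := Finset.card_eq_sum_card_fiberwise (s := (Finset.univ : Finset (Fin (4 * k + 3))))
      (t := Finset.range (2 * k + 1)) (f := fun a => gknLev k n (f a)) (by
        intro a _
        rcases gkn_cases (f a) with ⟨b, l, i, h⟩ | ⟨s, h⟩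
        · have := l.2
          simp only [h, gknLev, Finset.coe_range, Set.mem_Iio]
          omega
        · simp [h, gknLev])
    rw [Finset.card_univ, Fintype.card_fin] at this
    refine Eq.trans ?_ this.symm
    apply Finset.sum_congr rfl
    intro l _
    congr 1
    ext a
    simp [hT]
  have hle := gkn_sum_le k (fun l => (T l).card) hpair
  have hsp3 := Finset.card_le_card hsp
  simp only [Finset.card_map, Finset.card_univ, Fintype.card_fin] at hsp3
  have hall : ∀ s : Fin 3, ∃ a, f a = Sum.inr s := by
    have heq := Finset.eq_of_subset_of_card_le hsp (by
      simp only [Finset.card_map, Finset.card_univ, Fintype.card_fin]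
      omega)
    intro s
    have hs : (Sum.inr s : GknVert k n) ∈ (Finset.univ : Finset (Fin 3)).map
        ⟨Sum.inr, Sum.inr_injective⟩ := by simp
    rw [← heq, Finset.mem_map] at hs
    obtain ⟨a, _, ha⟩ := hs
    exact ⟨a, ha⟩
  -- end levels
  have hend : ∀ l, l < 2 * k → (∀ b : Bool, ∃ a, ∀ (L : Fin (2 * k)) (i : Fin n), (L : ℕ) = l →
      (Gkn k n A B).Adj (f a) (Sum.inl (b, L, i))) → (T l).card ≤ 2 := by
    intro l hl hv
    by_contra hn
    push Not at hn
    obtain ⟨x, hx, y, hy, hxy, hc⟩ := Finset.exists_ne_map_eq_of_card_lt_of_maps_to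
      (s := T l) (t := (Finset.univ : Finset Bool)) (f := fun a => gknSide k n (f a))
      (by simpa using hn) (fun _ _ => Finset.mem_coe.2 (Finset.mem_univ _))
    rw [hT] at hx hy
    obtain ⟨b, L, i, h, h'⟩ := gkn_lev_form hx hl
    obtain ⟨c, L', j, g, g'⟩ := gkn_lev_form hy hl
    simp only [h, g, gknSide] at hc
    have hL : L = L' := Fin.ext (by omega)
    subst hL hc
    have hij : i ≠ j := fun e => hxy (hinj _ _ (by rw [h, g, e]))
    obtain ⟨a, ha⟩ := hv b
    have q1 := ha L i h'
    have q2 := ha L j h'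
    have q3 : (Gkn k n A B).Adj (f x) (f y) := by
      rw [h, g]
      exact gkn_adj_same hij
    rw [← h] at q1
    rw [← g] at q2
    rw [hadj] at q1 q2 q3
    omega
  have hc0 : (T 0).card ≤ 2 := by
    apply hend 0 (by omega)
    intro b
    cases b
    · obtain ⟨a, ha⟩ := hall 0
      refine ⟨a, fun L i hL => ?_⟩
      rw [ha, gkn_adj_special]
      simp [hL]
    · obtain ⟨a, ha⟩ := hall 1
      refine ⟨a, fun L i hL => ?_⟩
      rw [ha, gkn_adj_special]
      simp [hL]
  have hcl : (T (2 * k - 1)).card ≤ 2 := by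
    apply hend (2 * k - 1) (by omega)
    intro b
    obtain ⟨a, ha⟩ := hall 2
    refine ⟨a, fun L i hL => ?_⟩
    rw [ha, gkn_adj_special]
    simp [hL]
  have hc := gkn_counts k (fun l => (T l).card) hpair hc0 hcl (by omega)
  -- `v₀`, `v₁` are the ends
  have hends : ∀ a (s : Fin 3), s ≠ 2 → f a = Sum.inr s → (a : ℕ) = 0 ∨ (a : ℕ) = 4 * k + 2 := by
    intro a s hs ha
    by_contra hn
    have ha' := a.2
    have key : ∀ x, (Gkn k n A B).Adj (f a) (f x) → ∃ (L : Fin (2 * k)) (i : Fin n), (L : ℕ) = 0 ∧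
        f x = Sum.inl (decide (s = 1), L, i) := by
      intro x hx
      rcases gkn_cases (f x) with ⟨b, L, i, h⟩ | ⟨s', h⟩
      · rw [ha, h, gkn_adj_special] at hx
        rcases hx with ⟨rfl, rfl, h0⟩ | ⟨rfl, rfl, h0⟩ | ⟨rfl, _⟩
        · exact ⟨L, i, h0, by simp [h]⟩
        · exact ⟨L, i, h0, by simp [h]⟩
        · exact absurd rfl hs
      · rw [ha, h] at hx
        exact absurd hx gkn_adj_special_special
    obtain ⟨L, i, h, h'⟩ := key ⟨a - 1, by omega⟩ (by rw [hadj]; simp; omega)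
    obtain ⟨L', j, g, g'⟩ := key ⟨a + 1, by omega⟩ (by rw [hadj]; simp)
    have hL : L = L' := Fin.ext (by omega)
    subst hL
    have hij : i ≠ j := by
      intro e
      have := hinj ⟨a - 1, by omega⟩ ⟨a + 1, by omega⟩ (by rw [h', g', e])
      rw [Fin.ext_iff] at this
      simp at this
    have q := gkn_adj_same (A := A) (B := B) (b := decide (s = 1)) (l := L) hij
    rw [← h', ← g', hadj] at q
    simp at q
    omega
  have hends2 : ∀ a : Fin (4 * k + 3), ((a : ℕ) = 0 ∨ (a : ℕ) = 4 * k + 2) →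
      ∃ s : Fin 3, s ≠ 2 ∧ f a = Sum.inr s := by
    intro a ha
    obtain ⟨x, hx⟩ := hall 0
    obtain ⟨y, hy⟩ := hall 1
    have hx' := hends x 0 (by decide) hx
    have hy' := hends y 1 (by decide) hy
    have hxy : (x : ℕ) ≠ y := by
      intro e
      rw [Fin.ext e, hy] at hx
      simp at hx
    rcases (by omega : (a : ℕ) = x ∨ (a : ℕ) = y) with e | e
    · exact ⟨0, by decide, by rw [Fin.ext e, hx]⟩
    · exact ⟨1, by decide, by rw [Fin.ext e, hy]⟩
  have hthree : ∀ l, l < 2 * k → ∀ x y z, x ∈ T l → y ∈ T l → z ∈ T l →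
      x ≠ y → x ≠ z → y ≠ z → False := by
    intro l hl x y z hx hy hz hxy hxz hyz
    have h1 : 2 < (T l).card := Finset.two_lt_card_iff.2 ⟨x, y, z, hx, hy, hz, hxy, hxz, hyz⟩
    have := hc l hl
    omega
  -- levels along the path
  have hlev : ∀ l, l < 2 * k → ∀ a : Fin (4 * k + 3), ((a : ℕ) = l + 1 ∨ (a : ℕ) = 4 * k + 1 - l) →
      gknLev k n (f a) = l := by
    intro l
    induction l using Nat.strong_induction_on with
    | _ l ih =>
    intro hl a ha
    have ha' := a.2
    have hnb : ∃ b : Fin (4 * k + 3), (b : ℕ) = a - 1 ∧ (a : ℕ) = l + 1 ∨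
        (b : ℕ) = a + 1 ∧ (a : ℕ) = 4 * k + 1 - l := by
      rcases ha with h | h
      · exact ⟨⟨a - 1, by omega⟩, Or.inl ⟨rfl, h⟩⟩
      · exact ⟨⟨a + 1, by omega⟩, Or.inr ⟨rfl, h⟩⟩
    obtain ⟨b, hb⟩ := hnb
    have hab : (Gkn k n A B).Adj (f b) (f a) := by
      rw [hadj]
      omega
    rcases Nat.eq_zero_or_pos l with rfl | hpos
    · obtain ⟨s, hs, hfb⟩ := hends2 b (by omega)
      rcases gkn_cases (f a) with ⟨c, L, i, h⟩ | ⟨s', h⟩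
      · rw [hfb, h, gkn_adj_special] at hab
        rw [h]
        simp only [gknLev]
        rcases hab with h | h | h
        · exact h.2.2
        · exact h.2.2
        · exact absurd h.1 hs
      · rw [hfb, h] at hab
        exact absurd hab gkn_adj_special_special
    · have hlb := ih (l - 1) (by omega) (by omega) b (by omega)
      obtain ⟨c, L, i, h, h'⟩ := gkn_lev_form hlb (by omega)
      rcases gkn_cases (f a) with ⟨c', L', i', g⟩ | ⟨s', g⟩
      · have hLL := hab
        rw [h, g] at hLL
        have hLL := gkn_adj_lev hLL
        have hla : gknLev k n (f a) = L' := by rw [g]; rfl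
        by_contra hne
        have bad : ∀ m, m < l → gknLev k n (f a) = m → False := by
          intro m hm hma
          have hxl := ih m hm (by omega) ⟨m + 1, by omega⟩ (Or.inl rfl)
          have hyl := ih m hm (by omega) ⟨4 * k + 1 - m, by omega⟩ (Or.inr rfl)
          refine hthree m (by omega) a _ _ ((hT _ _).2 hma) ((hT _ _).2 hxl) ((hT _ _).2 hyl)
            ?_ ?_ ?_ <;>
          · rw [Ne, Fin.ext_iff]
            simp only
            omega
        have := bad L'
        rcases hLL with e | e | e
        · exact bad L' (by omega) hla
        · exact bad L' (by omega) hla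
        · omega
      · exfalso
        rw [h, g, SimpleGraph.adj_comm, gkn_adj_special] at hab
        rcases hab with e | e | e
        · have := hends a s' (by rw [e.1]; decide) g
          omega
        · have := hends a s' (by rw [e.1]; decide) g
          omega
        · omega
  -- labels along the path
  have hlab : ∀ l (hl : l < 2 * k), ∃ b b' L i j, f ⟨l + 1, by omega⟩ = Sum.inl (b, L, i) ∧
      f ⟨4 * k + 1 - l, by omega⟩ = Sum.inl (b', L, j) ∧ (L : ℕ) = l ∧ b ≠ b' ∧ s(i, j) ∈ A := by
    have hform : ∀ l (hl : l < 2 * k), ∃ b b' L i j, f ⟨l + 1, by omega⟩ = Sum.inl (b, L, i) ∧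
        f ⟨4 * k + 1 - l, by omega⟩ = Sum.inl (b', L, j) ∧ (L : ℕ) = l ∧ b ≠ b' := by
      intro l hl
      obtain ⟨b, L, i, h, h'⟩ := gkn_lev_form (hlev l hl ⟨l + 1, by omega⟩ (Or.inl rfl)) hl
      obtain ⟨b', L', j, g, g'⟩ :=
        gkn_lev_form (hlev l hl ⟨4 * k + 1 - l, by omega⟩ (Or.inr rfl)) hl
      have hL : L = L' := Fin.ext (by omega)
      subst hL
      refine ⟨b, b', L, i, j, h, g, h', ?_⟩
      rintro rfl
      have hij : i ≠ j := by
        intro e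
        have := hinj ⟨l + 1, by omega⟩ ⟨4 * k + 1 - l, by omega⟩ (by rw [h, g, e])
        rw [Fin.ext_iff] at this
        simp only at this
        omega
      have q := gkn_adj_same (A := A) (B := B) (b := b) (l := L) hij
      rw [← h, ← g, hadj] at q
      simp only at q
      omega
    intro l
    induction l with
    | zero =>
      intro hl
      obtain ⟨b, b', L, i, j, h, g, h', hb⟩ := hform 0 hl
      refine ⟨b, b', L, i, j, h, g, h', hb, ?_⟩
      apply gkn_adj_A (B := B) h' hb
      rw [← h, ← g, hadj]
      simp only
      omega
    | succ l ih =>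
      intro hl
      obtain ⟨b, b', L, i, j, h, g, h', hb⟩ := hform (l + 1) hl
      obtain ⟨c, c', M, p, q, u, v, u', hcc, hpq⟩ := ih (by omega)
      refine ⟨b, b', L, i, j, h, g, h', hb, ?_⟩
      have hML : (L : ℕ) = M + 1 := by omega
      have e1 : i = q := by
        by_contra hne
        have := (gkn_adj_next (A := A) (B := B) (b := c') (b' := b) hML).2 (Ne.symm hne)
        rw [← h, ← v, hadj] at this
        simp only at this
        omega
      have e2 : j = p := by
        by_contra hne
        have := (gkn_adj_next (A := A) (B := B) (b := c) (b' := b') hML).2 (Ne.symm hne)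
        rw [← g, ← u, hadj] at this
        simp only at this
        omega
      rw [e1, e2, Sym2.eq_swap]
      exact hpq
  obtain ⟨b, b', L, i, j, h, g, h', hb, hmem⟩ := hlab (2 * k - 1) (by omega)
  refine ⟨s(i, j), hmem, ?_⟩
  apply gkn_adj_B (A := A) h' hb
  rw [← h, ← g, hadj]
  simp only
  omega

/-- The vertices of the induced path built from `{i, j} ∈ A ∩ B`. -/
def gknPath (k n : ℕ) (i j : Fin n) (t : ℕ) : GknVert k n :=
  if h : 1 ≤ t ∧ t ≤ 2 * k then
    Sum.inl (false, ⟨t - 1, by omega⟩, if (t - 1) % 2 = 0 then i else j)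
  else if h : 2 * k + 2 ≤ t ∧ t ≤ 4 * k + 1 then
    Sum.inl (true, ⟨4 * k + 1 - t, by omega⟩, if (4 * k + 1 - t) % 2 = 0 then j else i)
  else if t = 0 then Sum.inr 0
  else if t = 2 * k + 1 then Sum.inr 2
  else Sum.inr 1

/-- Position of a vertex along the path. -/
def gknPos (k n : ℕ) : GknVert k n → ℕ
  | Sum.inl (false, l, _) => l + 1
  | Sum.inl (true, l, _) => 4 * k + 1 - l
  | Sum.inr s => if s = 0 then 0 else if s = 2 then 2 * k + 1 else 4 * k + 2

lemma gknPos_path (k n : ℕ) (i j : Fin n) (t : ℕ) (ht : t < 4 * k + 3) :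
    gknPos k n (gknPath k n i j t) = t := by
  unfold gknPath
  split_ifs <;> simp [gknPos] <;> omega

lemma gkn_path_of_inter (k n : ℕ) (hk : 1 ≤ k) (A B : Set (Sym2 (Fin n))) (i j : Fin n)
    (hij : i ≠ j) (hA : s(i, j) ∈ A) (hB : s(i, j) ∈ B) :
    Nonempty (SimpleGraph.pathGraph (4 * k + 3) ↪g Gkn k n A B) := by
  have hA' : s(j, i) ∈ A := by rwa [Sym2.eq_swap]
  have hB' : s(j, i) ∈ B := by rwa [Sym2.eq_swap]
  have key : ∀ s t, s < t → t < 4 * k + 3 →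
      ((Gkn k n A B).Adj (gknPath k n i j s) (gknPath k n i j t) ↔ s + 1 = t) := by
    intro s t hst ht
    rw [Gkn, SimpleGraph.fromRel_adj]
    have hne : gknPath k n i j s ≠ gknPath k n i j t := by
      intro e
      have := congrArg (gknPos k n) e
      rw [gknPos_path _ _ _ _ _ (by omega), gknPos_path _ _ _ _ _ ht] at this
      omega
    simp only [hne, ne_eq, not_false_eq_true, true_and]
    unfold gknPath
    split_ifs <;> simp [gknRel, hij, hij.symm, hA, hB, hA', hB', Fin.ext_iff] <;> omega
  refine ⟨⟨⟨fun t => gknPath k n i j t, ?_⟩, ?_⟩⟩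
  · intro s t e
    have := congrArg (gknPos k n) e
    simp only at this
    rw [gknPos_path _ _ _ _ _ s.2, gknPos_path _ _ _ _ _ t.2] at this
    exact Fin.ext this
  · intro s t
    change (Gkn k n A B).Adj (gknPath k n i j s) (gknPath k n i j t) ↔ _
    rw [SimpleGraph.pathGraph_adj]
    rcases lt_trichotomy (s : ℕ) t with h | h | h
    · rw [key s t h t.2]
      omega
    · rw [h]
      simp
    · rw [SimpleGraph.adj_comm, key t s h s.2]
      omega

/-- `G_{k,n}(A,B)` contains an induced path on `4k+3` vertices
if and only if `A ∩ B ≠ ∅`. -/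
theorem gkn_pathGraph_embedding_iff_inter_nonempty
    (k n : ℕ) (hk : 1 ≤ k) (hn : 1 ≤ n)
    (A B : Set (Sym2 (Fin n)))
    (hA : ∀ e ∈ A, ¬ e.IsDiag) (hB : ∀ e ∈ B, ¬ e.IsDiag) :
    Nonempty (SimpleGraph.pathGraph (4 * k + 3) ↪g Gkn k n A B) ↔ (A ∩ B).Nonempty := by

  constructor
  · rintro ⟨f⟩
    exact gkn_inter_of_path k n hk A B f
  · rintro ⟨e, heA, heB⟩
    induction e using Sym2.ind with
    | _ i j =>
      exact gkn_path_of_inter k n hk A B i j (fun h => hA _ heA (by simpa using h)) heA heB
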